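/- Let Γ = (A, R) be an AFRA. The ideal extension of Γ (a maximal ideal set) is a complete extension of Γ. -/

import Mathlib

/-!
If `V` is acceptable w.r.t. the ideal extension `S`, then `insert V S` is admissible
(`AFRA.Admissible.insert`). Every preferred `P` contains `S`, so `V` is acceptable w.r.t. `P` and
hence lies in `P` (`AFRA.Preferred.mem_of_acceptable`). Thus `insert V S` is ideal, and maximality
of `S` gives `V ∈ S`.
-/

/-- An Argumentation Framework with Recursive Attacks: a set (type) of
arguments, a set (type) of attacks, each attack having a source argument
and a target which is either an argument or an attack. -/
structure AFRA where
  Arg : Type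
  Att : Type
  src : Att → Arg
  trg : Att → Arg ⊕ Att

namespace AFRA

/-- The elements of an AFRA: arguments and attacks. -/
abbrev El (Γ : AFRA) : Type := Γ.Arg ⊕ Γ.Att

variable (Γ : AFRA)

/-- An attack `α` defeats `V` iff `V = trg α` (direct defeat) or `V` is an
attack whose source is `trg α` (indirect defeat). -/
def Defeats (α : Γ.Att) (V : Γ.El) : Prop :=
  V = Γ.trg α ∨ ∃ β : Γ.Att, V = Sum.inr β ∧ Γ.trg α = Sum.inl (Γ.src β)

/-- `W` is acceptable w.r.t. `S` iff every attack defeating `W` is defeated by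
some attack in `S`. -/
def Acceptable (S : Set Γ.El) (W : Γ.El) : Prop :=
  ∀ α : Γ.Att, Γ.Defeats α W → ∃ β : Γ.Att, Sum.inr β ∈ S ∧ Γ.Defeats β (Sum.inr α)

/-- `S` is conflict-free iff no element of `S` defeats another element of `S`. -/
def ConflictFree (S : Set Γ.El) : Prop :=
  ¬ ∃ α : Γ.Att, Sum.inr α ∈ S ∧ ∃ W ∈ S, Γ.Defeats α W

/-- The characteristic function of an AFRA. -/
def charFun (S : Set Γ.El) : Set Γ.El := {V | Γ.Acceptable S V}

/-- `S` is admissible iff it is conflict-free and all its elements are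
acceptable w.r.t. `S`. -/
def Admissible (S : Set Γ.El) : Prop :=
  Γ.ConflictFree S ∧ ∀ V ∈ S, Γ.Acceptable S V

/-- `S` is a complete extension iff it is admissible and contains every
element acceptable w.r.t. it. -/
def Complete (S : Set Γ.El) : Prop :=
  Γ.Admissible S ∧ ∀ V : Γ.El, Γ.Acceptable S V → V ∈ S

/-- `S` is a preferred extension iff it is a maximal admissible set. -/
def Preferred (S : Set Γ.El) : Prop :=
  Γ.Admissible S ∧ ∀ T : Set Γ.El, Γ.Admissible T → S ⊆ T → S = T

/-- `S` is a stable extension iff it is conflict-free and defeats every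
element outside of it. -/
def Stable (S : Set Γ.El) : Prop :=
  Γ.ConflictFree S ∧ ∀ V : Γ.El, V ∉ S → ∃ α : Γ.Att, Sum.inr α ∈ S ∧ Γ.Defeats α V

/-- The range of `S`: `S` together with everything defeated by `S`. -/
def range (S : Set Γ.El) : Set Γ.El :=
  S ∪ {V : Γ.El | ∃ α : Γ.Att, Sum.inr α ∈ S ∧ Γ.Defeats α V}

/-- `S` is a semi-stable extension iff it is a complete extension with
maximal range among complete extensions. -/
def SemiStable (S : Set Γ.El) : Prop :=
  Γ.Complete S ∧ ∀ T : Set Γ.El, Γ.Complete T → Γ.range S ⊆ Γ.range T → Γ.range T = Γ.range S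

/-- `S` is ideal iff it is admissible and contained in every preferred
extension. -/
def Ideal (S : Set Γ.El) : Prop :=
  Γ.Admissible S ∧ ∀ P : Set Γ.El, Γ.Preferred P → S ⊆ P

/-- An AFRA is an AF when every attack targets an argument. -/
def IsAF : Prop := ∀ α : Γ.Att, ∃ a : Γ.Arg, Γ.trg α = Sum.inl a

/-- The Dung attack relation between arguments. -/
def AttacksAF (a b : Γ.Arg) : Prop :=
  ∃ α : Γ.Att, Γ.src α = a ∧ Γ.trg α = Sum.inl b

/-- D-conflict-freeness of a set of arguments. -/
def DConflictFree (U : Set Γ.Arg) : Prop :=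
  ¬ ∃ a ∈ U, ∃ b ∈ U, Γ.AttacksAF a b

/-- D-acceptability of an argument w.r.t. a set of arguments. -/
def DAcceptable (U : Set Γ.Arg) (a : Γ.Arg) : Prop :=
  ∀ b : Γ.Arg, Γ.AttacksAF b a → ∃ c ∈ U, Γ.AttacksAF c b

/-- The D-characteristic function on sets of arguments. -/
def dCharFun (U : Set Γ.Arg) : Set Γ.Arg := {a | Γ.DAcceptable U a}

/-- D-admissibility of a set of arguments. -/
def DAdmissible (U : Set Γ.Arg) : Prop :=
  Γ.DConflictFree U ∧ ∀ a ∈ U, Γ.DAcceptable U a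

/-- D-complete extensions. -/
def DComplete (U : Set Γ.Arg) : Prop :=
  Γ.DAdmissible U ∧ ∀ a : Γ.Arg, Γ.DAcceptable U a → a ∈ U

/-- D-preferred extensions: maximal D-admissible sets. -/
def DPreferred (U : Set Γ.Arg) : Prop :=
  Γ.DAdmissible U ∧ ∀ W : Set Γ.Arg, Γ.DAdmissible W → U ⊆ W → U = W

/-- The operator completing a set of arguments with all attacks arising
from it. -/
def Ext (U : Set Γ.Arg) : Set Γ.El :=
  (Sum.inl '' U) ∪ (Sum.inr '' {α : Γ.Att | Γ.src α ∈ U})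

end AFRA

namespace AFRA

theorem Acceptable.mono {Γ : AFRA} {S T : Set Γ.El} {V : Γ.El} (h : Γ.Acceptable S V)
    (hST : S ⊆ T) : Γ.Acceptable T V := fun α hα =>
  let ⟨β, hβ, hd⟩ := h α hα
  ⟨β, hST hβ, hd⟩

/-- Dung's fundamental lemma for AFRAs. If two elements of `insert V S` were in conflict, then,
both being acceptable w.r.t. `S`, an attack of `S` would defeat the attacking one, and another
attack of `S` would defeat that defender, contradicting conflict-freeness of `S`. -/
theorem Admissible.insert {Γ : AFRA} {S : Set Γ.El} {V : Γ.El} (hS : Γ.Admissible S)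
    (hV : Γ.Acceptable S V) : Γ.Admissible (insert V S) := by
  have hacc : ∀ W ∈ Insert.insert V S, Γ.Acceptable S W := by
    rintro W (rfl | hW)
    · exact hV
    · exact hS.2 W hW
  refine ⟨?_, fun W hW => (hacc W hW).mono (Set.subset_insert V S)⟩
  rintro ⟨α, hα, W, hW, hαW⟩
  obtain ⟨β, hβ, hβα⟩ := hacc W hW α hαW
  obtain ⟨γ, hγ, hγβ⟩ := hacc _ hα β hβα
  exact hS.1 ⟨γ, hγ, _, hβ, hγβ⟩

theorem Preferred.mem_of_acceptable {Γ : AFRA} {P : Set Γ.El} {V : Γ.El} (hP : Γ.Preferred P)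
    (hV : Γ.Acceptable P V) : V ∈ P := by
  rw [hP.2 _ (hP.1.insert hV) (Set.subset_insert V P)]
  exact Set.mem_insert V P

end AFRA

/-- The ideal extension (a maximal ideal set) is a complete extension. -/
theorem stmt_14 (Γ : AFRA) (S : Set Γ.El)
    (hideal : Γ.Ideal S)
    (hmax : ∀ T : Set Γ.El, Γ.Ideal T → S ⊆ T → S = T) :
    Γ.Complete S := by
  refine ⟨hideal.1, fun V hV => ?_⟩
  have hT : Γ.Ideal (insert V S) :=
    ⟨hideal.1.insert hV, fun P hP => Set.insert_subset
      (hP.mem_of_acceptable (hV.mono (hideal.2 P hP))) (hideal.2 P hP)⟩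
  rw [hmax _ hT (Set.subset_insert V S)]
  exact Set.mem_insert V S
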